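/- Let μ be a probability measure on ℝⁿ such that ∫ exp(λ‖x‖) μ(dx) < ∞ for some λ > 0. Then the polynomials are dense in L²(μ): the linear span of the equivalence classes of the monomial functions x ↦ x₁^{p₁} ⋯ xₙ^{pₙ}, over all multi-indices p ∈ ℕⁿ, is a dense subspace of the real Hilbert space L²(ℝⁿ, μ). -/

import Mathlib

open MeasureTheory

/-!
Let `g ∈ L²(μ)` be orthogonal to all monomials, hence to all powers `Lᵏ` of linear functionals. By
Cauchy–Schwarz the measures `g⁺ μ` and `g⁻ μ` have exponential moments, so the Fourier transforms of
their images under `L` extend holomorphically to a strip. The derivatives of these extensions at `0`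
are the moments of `L`, which agree by orthogonality. So the extensions coincide, `g⁺ μ` and `g⁻ μ`
have the same characteristic function, and `g = 0` almost everywhere.
-/

open ProbabilityTheory
open scoped NNReal Topology

lemma eventuallyEq_of_forall_iteratedDeriv_eq {𝕜 F : Type*} [NontriviallyNormedField 𝕜] [CharZero 𝕜]
    [NormedAddCommGroup F] [NormedSpace 𝕜 F] [CompleteSpace F] {f g : 𝕜 → F} {z : 𝕜}
    (hf : AnalyticAt 𝕜 f z) (hg : AnalyticAt 𝕜 g z)
    (h : ∀ k, iteratedDeriv k f z = iteratedDeriv k g z) : f =ᶠ[𝓝 z] g := by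
  have h_order : analyticOrderAt (f - g) z = ⊤ := ENat.eq_top_iff_forall_ge.mpr fun m ↦
    (natCast_le_analyticOrderAt_iff_iteratedDeriv_eq_zero (hf.sub hg)).mpr fun k _ ↦ by
      rw [iteratedDeriv_sub hf.contDiffAt hg.contDiffAt, h, sub_self]
  exact (analyticOrderAt_eq_top.mp h_order).mono fun _ ↦ sub_eq_zero.mp

section MomentGeneratingFunction

variable {Ω Ω' : Type*} {mΩ : MeasurableSpace Ω} {mΩ' : MeasurableSpace Ω'}
  {μ : Measure Ω} {μ' : Measure Ω'} {X : Ω → ℝ} {Y : Ω' → ℝ}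

lemma iteratedDeriv_complexMGF_zero (hX : 0 ∈ interior (integrableExpSet X μ)) (k : ℕ) :
    iteratedDeriv k (complexMGF X μ) 0 = ((∫ ω, X ω ^ k ∂μ : ℝ) : ℂ) := by
  rw [iteratedDeriv_complexMGF (by simpa using hX), ← integral_complex_ofReal]
  simp

lemma eqOn_complexMGF_of_forall_integral_pow_eq
    (hX : 0 ∈ interior (integrableExpSet X μ)) (hY : 0 ∈ interior (integrableExpSet Y μ'))
    (h : ∀ k : ℕ, ∫ ω, X ω ^ k ∂μ = ∫ ω, Y ω ^ k ∂μ') :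
    Set.EqOn (complexMGF X μ) (complexMGF Y μ')
      {z | z.re ∈ interior (integrableExpSet X μ) ∩ interior (integrableExpSet Y μ')} := by
  have h_strip : IsPreconnected
      {z : ℂ | z.re ∈ interior (integrableExpSet X μ) ∩ interior (integrableExpSet Y μ')} :=
    ((convex_integrableExpSet.interior.inter convex_integrableExpSet.interior).linear_preimage
      Complex.reLm).isPreconnected
  have h_germ : complexMGF X μ =ᶠ[𝓝 0] complexMGF Y μ' :=
    eventuallyEq_of_forall_iteratedDeriv_eq
      (analyticAt_complexMGF (by simpa using hX)) (analyticAt_complexMGF (by simpa using hY))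
      fun k ↦ by
        rw [iteratedDeriv_complexMGF_zero hX, iteratedDeriv_complexMGF_zero hY, h]
  exact (analyticOnNhd_complexMGF.mono fun z hz ↦ hz.1).eqOn_of_preconnected_of_eventuallyEq
    (analyticOnNhd_complexMGF.mono fun z hz ↦ hz.2) h_strip ⟨by simpa using hX, by simpa using hY⟩
    h_germ

lemma isFiniteMeasure_of_zero_mem_integrableExpSet (hX : 0 ∈ integrableExpSet X μ) :
    IsFiniteMeasure μ := by
  have h_one : Integrable (fun _ ↦ (1 : ℝ)) μ := by simpa [integrableExpSet] using hX
  exact (integrable_const_iff_isFiniteMeasure one_ne_zero).mp h_one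

lemma zero_mem_interior_integrableExpSet_of_abs_le_mul_norm {F : Type*} [SeminormedAddGroup F]
    {f : Ω → F} {c C : ℝ} (hc : 0 < c) (hX : AEStronglyMeasurable X μ)
    (hf : Integrable (fun ω ↦ Real.exp (c * ‖f ω‖)) μ) (hXf : ∀ ω, |X ω| ≤ C * ‖f ω‖) :
    0 ∈ interior (integrableExpSet X μ) := by
  have h_open : IsOpen {t : ℝ | |t| * C < c} := isOpen_lt (by fun_prop) continuous_const
  refine mem_interior.mpr ⟨{t | |t| * C < c}, fun t ht ↦ ?_, h_open, by simpa using hc⟩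
  refine hf.mono (by fun_prop) (.of_forall fun ω ↦ ?_)
  simp only [Real.norm_eq_abs, Real.abs_exp, Real.exp_le_exp]
  calc t * X ω ≤ |t| * |X ω| := (le_abs_self _).trans_eq (abs_mul _ _)
    _ ≤ |t| * (C * ‖f ω‖) := by gcongr; exact hXf ω
    _ = |t| * C * ‖f ω‖ := (mul_assoc _ _ _).symm
    _ ≤ c * ‖f ω‖ := mul_le_mul_of_nonneg_right (le_of_lt ht) (norm_nonneg _)

lemma memLp_pow_of_mem_interior_integrableExpSet (hX : 0 ∈ interior (integrableExpSet X μ))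
    (k : ℕ) (q : ℝ≥0) : MemLp (fun ω ↦ X ω ^ k) q μ := by
  have hX_meas : AEMeasurable X μ := aemeasurable_of_mem_interior_integrableExpSet hX
  rcases eq_or_ne q 0 with rfl | hq
  · exact memLp_zero_iff_aestronglyMeasurable.mpr (by fun_prop)
  · rw [← integrable_norm_rpow_iff (by fun_prop) (by simpa using hq) ENNReal.coe_ne_top]
    convert integrable_rpow_abs_of_mem_interior_integrableExpSet hX (p := k * q) (by positivity)
      using 2 with ω
    rw [norm_pow, Real.norm_eq_abs, ENNReal.coe_toReal, Real.rpow_mul (abs_nonneg _),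
      Real.rpow_natCast]

lemma memLp_exp_div_mul {c : ℝ} {q : ℝ≥0} (hq : q ≠ 0) (hX : AEMeasurable X μ)
    (h : Integrable (fun ω ↦ Real.exp (c * X ω)) μ) :
    MemLp (fun ω ↦ Real.exp (c / q * X ω)) q μ := by
  rw [← integrable_norm_rpow_iff (by fun_prop) (by simpa using hq) ENNReal.coe_ne_top]
  refine h.congr (.of_forall fun ω ↦ ?_)
  have hq_real : (q : ℝ) ≠ 0 := by exact_mod_cast hq
  simp only [Real.norm_eq_abs, Real.abs_exp, ENNReal.coe_toReal, ← Real.exp_mul]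
  field_simp

end MomentGeneratingFunction

section SignedDensity

variable {Ω : Type*} {mΩ : MeasurableSpace Ω} {μ : Measure Ω} {f g : Ω → ℝ}

lemma integrable_withDensity_ofReal_of_integrable_mul (hg : AEMeasurable g μ)
    (hgf : Integrable (fun ω ↦ g ω * f ω) μ) :
    Integrable f (μ.withDensity fun ω ↦ ENNReal.ofReal (g ω)) := by
  rw [integrable_withDensity_iff_integrable_smul₀' hg.ennreal_ofReal (by simp)]
  have h_pos : NullMeasurableSet {ω | 0 < g ω} μ := nullMeasurableSet_lt aemeasurable_const hg
  refine (hgf.indicator₀ h_pos).congr (.of_forall fun ω ↦ ?_)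
  by_cases hω : 0 < g ω
  · simp [hω, hω.le]
  · simp [hω, le_of_not_gt hω, ENNReal.ofReal_of_nonpos]

lemma integral_withDensity_ofReal_sub_integral_withDensity_ofReal_neg (hg : AEMeasurable g μ)
    (hf_pos : Integrable f (μ.withDensity fun ω ↦ ENNReal.ofReal (g ω)))
    (hf_neg : Integrable f (μ.withDensity fun ω ↦ ENNReal.ofReal (-g ω))) :
    ∫ ω, f ω ∂(μ.withDensity fun ω ↦ ENNReal.ofReal (g ω)) -
      ∫ ω, f ω ∂(μ.withDensity fun ω ↦ ENNReal.ofReal (-g ω)) = ∫ ω, g ω * f ω ∂μ := by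
  have hg_neg : AEMeasurable (fun ω ↦ ENNReal.ofReal (-g ω)) μ := hg.neg.ennreal_ofReal
  rw [integrable_withDensity_iff_integrable_smul₀' hg.ennreal_ofReal (by simp)] at hf_pos
  rw [integrable_withDensity_iff_integrable_smul₀' hg_neg (by simp)] at hf_neg
  rw [integral_withDensity_eq_integral_toReal_smul₀ hg.ennreal_ofReal (by simp),
    integral_withDensity_eq_integral_toReal_smul₀ hg_neg (by simp),
    ← integral_sub hf_pos hf_neg]
  refine integral_congr_ae (.of_forall fun ω ↦ ?_)
  simp only [ENNReal.toReal_ofReal', smul_eq_mul, ← sub_mul, max_zero_sub_max_neg_zero_eq_self]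

lemma ae_eq_zero_of_withDensity_ofReal_eq_withDensity_ofReal_neg (hg : Integrable g μ)
    (h : (μ.withDensity fun ω ↦ ENNReal.ofReal (g ω)) =
      μ.withDensity fun ω ↦ ENNReal.ofReal (-g ω)) : g =ᵐ[μ] 0 := by
  have h_ae : (fun ω ↦ ENNReal.ofReal (g ω)) =ᵐ[μ] fun ω ↦ ENNReal.ofReal (-g ω) :=
    (withDensity_eq_iff hg.aemeasurable.ennreal_ofReal hg.aemeasurable.neg.ennreal_ofReal
      hg.lintegral_lt_top.ne).mp h
  filter_upwards [h_ae] with ω hω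
  rcases le_total 0 (g ω) with h_nonneg | h_nonpos
  · rw [ENNReal.ofReal_of_nonpos (neg_nonpos.mpr h_nonneg), ENNReal.ofReal_eq_zero] at hω
    exact le_antisymm hω h_nonneg
  · rw [ENNReal.ofReal_of_nonpos h_nonpos, eq_comm, ENNReal.ofReal_eq_zero, neg_nonpos] at hω
    exact le_antisymm h_nonpos hω

end SignedDensity

section ExponentialMoment

variable {E : Type*} [NormedAddCommGroup E] [NormedSpace ℝ E] [MeasurableSpace E] [BorelSpace E]
  {μ ν : Measure E} {c : ℝ}

lemma zero_mem_interior_integrableExpSet_dual (hc : 0 < c)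
    (hμ : Integrable (fun x ↦ Real.exp (c * ‖x‖)) μ) (L : StrongDual ℝ E) :
    0 ∈ interior (integrableExpSet L μ) :=
  zero_mem_interior_integrableExpSet_of_abs_le_mul_norm hc (by fun_prop) hμ L.le_opNorm

lemma memLp_prod_dual_pow {ι : Type*} (s : Finset ι) (L : ι → StrongDual ℝ E) (p : ι → ℕ)
    (q : ℝ≥0) (hc : 0 < c) (hμ : Integrable (fun x ↦ Real.exp (c * ‖x‖)) μ) :
    MemLp (fun x ↦ ∏ i ∈ s, L i x ^ p i) q μ := by
  have h_norm : 0 ∈ interior (integrableExpSet (fun x ↦ ‖x‖) μ) :=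
    zero_mem_interior_integrableExpSet_of_abs_le_mul_norm (C := 1) hc (by fun_prop) hμ (by simp)
  refine (memLp_pow_of_mem_interior_integrableExpSet h_norm (∑ i ∈ s, p i) q).of_le_mul
    (c := ∏ i ∈ s, ‖L i‖ ^ p i) (by fun_prop) (.of_forall fun x ↦ ?_)
  calc ‖∏ i ∈ s, L i x ^ p i‖ = ∏ i ∈ s, ‖L i x‖ ^ p i := by simp only [norm_prod, norm_pow]
    _ ≤ ∏ i ∈ s, (‖L i‖ * ‖x‖) ^ p i := by gcongr with i; exact (L i).le_opNorm x
    _ = (∏ i ∈ s, ‖L i‖ ^ p i) * ‖‖x‖ ^ ∑ i ∈ s, p i‖ := by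
      simp only [mul_pow, Finset.prod_mul_distrib, Finset.prod_pow_eq_pow_sum, norm_pow, norm_norm]

variable [CompleteSpace E] [SecondCountableTopology E]

theorem ext_of_forall_integral_dual_pow_eq (hc : 0 < c)
    (hμ : Integrable (fun x ↦ Real.exp (c * ‖x‖)) μ)
    (hν : Integrable (fun x ↦ Real.exp (c * ‖x‖)) ν)
    (h : ∀ (L : StrongDual ℝ E) (k : ℕ), ∫ x, L x ^ k ∂μ = ∫ x, L x ^ k ∂ν) : μ = ν := by
  have hμL := zero_mem_interior_integrableExpSet_dual hc hμ
  have hνL := zero_mem_interior_integrableExpSet_dual hc hν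
  have : IsFiniteMeasure μ :=
    isFiniteMeasure_of_zero_mem_integrableExpSet (interior_subset (hμL 0))
  have : IsFiniteMeasure ν :=
    isFiniteMeasure_of_zero_mem_integrableExpSet (interior_subset (hνL 0))
  refine Measure.ext_of_charFunDual (funext fun L ↦ ?_)
  have h_eqOn := eqOn_complexMGF_of_forall_integral_pow_eq (hμL L) (hνL L) (h L)
  simpa only [complexMGF, charFunDual_apply, mul_comm] using
    h_eqOn (x := Complex.I) ⟨by simpa using hμL L, by simpa using hνL L⟩

theorem ae_eq_zero_of_forall_integral_mul_dual_pow_eq_zero {g : E → ℝ} (hc : 0 < c)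
    (hg : AEMeasurable g μ) (hg_exp : Integrable (fun x ↦ g x * Real.exp (c * ‖x‖)) μ)
    (h : ∀ (L : StrongDual ℝ E) (k : ℕ), ∫ x, g x * L x ^ k ∂μ = 0) : g =ᵐ[μ] 0 := by
  have h_pos := integrable_withDensity_ofReal_of_integrable_mul hg hg_exp
  have h_neg := integrable_withDensity_ofReal_of_integrable_mul hg.neg
    (hg_exp.neg.congr (.of_forall fun x ↦ (neg_mul _ _).symm))
  have hg_int : Integrable g μ := hg_exp.mono hg.aestronglyMeasurable <| .of_forall fun x ↦ by
    rw [norm_mul]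
    exact le_mul_of_one_le_right (norm_nonneg _) <| by
      simpa using mul_nonneg hc.le (norm_nonneg x)
  refine ae_eq_zero_of_withDensity_ofReal_eq_withDensity_ofReal_neg hg_int <|
    ext_of_forall_integral_dual_pow_eq hc h_pos h_neg fun L k ↦ ?_
  have h_moment := integral_withDensity_ofReal_sub_integral_withDensity_ofReal_neg hg
    (integrable_pow_of_mem_interior_integrableExpSet
      (zero_mem_interior_integrableExpSet_dual hc h_pos L) k)
    (integrable_pow_of_mem_interior_integrableExpSet
      (zero_mem_interior_integrableExpSet_dual hc h_neg L) k)
  exact sub_eq_zero.mp (h_moment.trans (h L k))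

end ExponentialMoment

lemma dense_span_Lp_two_of_forall_integral_mul_eq_zero {Ω κ : Type*} {mΩ : MeasurableSpace Ω}
    {μ : Measure Ω} {F : κ → Ω → ℝ} (hF : ∀ k, MemLp (F k) 2 μ)
    (h : ∀ g : Ω → ℝ, MemLp g 2 μ → (∀ k, ∫ ω, g ω * F k ω ∂μ = 0) → g =ᵐ[μ] 0) :
    Dense (Submodule.span ℝ {f : Lp ℝ 2 μ | ∃ k, f =ᵐ[μ] F k} : Set (Lp ℝ 2 μ)) := by
  rw [Submodule.dense_iff_topologicalClosure_eq_top, Submodule.topologicalClosure_eq_top_iff,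
    Submodule.eq_bot_iff]
  intro g hg
  refine (Lp.eq_zero_iff_ae_eq_zero).mpr (h g (Lp.memLp g) fun k ↦ ?_)
  have h_inner : inner ℝ ((hF k).toLp (F k)) g = 0 :=
    (Submodule.mem_orthogonal _ _).mp hg _ (Submodule.subset_span ⟨k, (hF k).coeFn_toLp⟩)
  rw [← h_inner, L2.inner_def]
  refine integral_congr_ae ?_
  filter_upwards [(hF k).coeFn_toLp] with ω hω
  simp [hω]

lemma linearMap_apply_pow_eq_sum_prod_repr_pow {ι R M : Type*} [Fintype ι] [DecidableEq ι]
    [CommSemiring R] [AddCommMonoid M] [Module R M] (b : Module.Basis ι R M) (L : M →ₗ[R] R)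
    (k : ℕ) (x : M) :
    L x ^ k = ∑ p ∈ Finset.univ.piAntidiag k,
      (Nat.multinomial Finset.univ p * ∏ i, L (b i) ^ p i) * ∏ i, b.repr x i ^ p i := by
  have h_sum : L x = ∑ i, L (b i) * b.repr x i := by
    conv_lhs => rw [← b.sum_repr x, map_sum]
    simp only [map_smul, smul_eq_mul, mul_comm]
  rw [h_sum, Finset.sum_pow_eq_sum_piAntidiag]
  simp only [mul_pow, Finset.prod_mul_distrib, mul_assoc]

lemma integral_mul_pow_eq_zero_of_forall_integral_mul_prod_repr_pow {ι E : Type*} [Fintype ι]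
    [AddCommGroup E] [Module ℝ E] [MeasurableSpace E]
    {μ : Measure E} {g : E → ℝ} (b : Module.Basis ι ℝ E)
    (h_int : ∀ p : ι → ℕ, Integrable (fun x ↦ g x * ∏ i, b.repr x i ^ p i) μ)
    (h : ∀ p : ι → ℕ, ∫ x, g x * ∏ i, b.repr x i ^ p i ∂μ = 0) (L : E →ₗ[ℝ] ℝ) (k : ℕ) :
    ∫ x, g x * L x ^ k ∂μ = 0 := by
  classical
  have h_expand (x : E) : g x * L x ^ k = ∑ p ∈ Finset.univ.piAntidiag k,
      (Nat.multinomial Finset.univ p * ∏ i, L (b i) ^ p i) * (g x * ∏ i, b.repr x i ^ p i) := by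
    rw [linearMap_apply_pow_eq_sum_prod_repr_pow b, Finset.mul_sum]
    exact Finset.sum_congr rfl fun p _ ↦ mul_left_comm _ _ _
  simp only [h_expand]
  rw [integral_finsetSum _ fun p _ ↦ (h_int p).const_mul _]
  simp only [integral_const_mul, h, mul_zero, Finset.sum_const_zero]

theorem polynomials_dense_in_L2_of_exp_moment_general {ι E : Type*} [Fintype ι]
    [NormedAddCommGroup E] [NormedSpace ℝ E] [MeasurableSpace E] [BorelSpace E]
    (b : Module.Basis ι ℝ E) (μ : Measure E)
    (hexp : ∃ c > (0 : ℝ), Integrable (fun x ↦ Real.exp (c * ‖x‖)) μ) :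
    Dense (Submodule.span ℝ
      {f : Lp ℝ 2 μ | ∃ p : ι → ℕ, f =ᵐ[μ] fun x ↦ ∏ i, b.repr x i ^ p i} : Set (Lp ℝ 2 μ)) := by
  obtain ⟨c, hc, hμ⟩ := hexp
  have : FiniteDimensional ℝ E := b.finiteDimensional_of_finite
  have : CompleteSpace E := FiniteDimensional.complete ℝ E
  have : ProperSpace E := FiniteDimensional.proper_real E
  have h_monomial (p : ι → ℕ) : MemLp (fun x ↦ ∏ i, b.repr x i ^ p i) 2 μ :=
    memLp_prod_dual_pow Finset.univ (fun i ↦ (b.coord i).toContinuousLinearMap) p 2 hc hμ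
  refine dense_span_Lp_two_of_forall_integral_mul_eq_zero h_monomial fun g hg hg_orth ↦ ?_
  have h_exp : MemLp (fun x ↦ Real.exp (c / 2 * ‖x‖)) 2 μ :=
    memLp_exp_div_mul two_ne_zero (by fun_prop) hμ
  exact ae_eq_zero_of_forall_integral_mul_dual_pow_eq_zero (half_pos hc)
    hg.aestronglyMeasurable.aemeasurable (hg.integrable_mul h_exp) fun L ↦
      integral_mul_pow_eq_zero_of_forall_integral_mul_prod_repr_pow b
        (fun p ↦ hg.integrable_mul (h_monomial p)) hg_orth L.toLinearMap

/-- If a probability measure `μ` on `ℝⁿ` has a finite exponential moment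
(`∫ exp(λ‖x‖) μ(dx) < ∞` for some `λ > 0`), then the polynomials are dense in `L²(μ)`:
the span of the (equivalence classes of the) monomials `x ↦ x₁^{p₁} ⋯ xₙ^{pₙ}` over all
multi-indices `p ∈ ℕⁿ` is dense in `L²(ℝⁿ, μ)`. -/
theorem polynomials_dense_in_L2_of_exp_moment (n : ℕ)
    (μ : Measure (EuclideanSpace ℝ (Fin n))) [IsProbabilityMeasure μ]
    (hexp : ∃ lam > (0 : ℝ), Integrable (fun x : EuclideanSpace ℝ (Fin n) =>
      Real.exp (lam * ‖x‖)) μ) :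
    Dense ((Submodule.span ℝ
      {f : Lp ℝ 2 μ | ∃ p : Fin n → ℕ,
        (f : EuclideanSpace ℝ (Fin n) → ℝ) =ᵐ[μ] fun x => ∏ i, (x i) ^ (p i)} :
        Submodule ℝ (Lp ℝ 2 μ)) : Set (Lp ℝ 2 μ)) :=
  polynomials_dense_in_L2_of_exp_moment_general (EuclideanSpace.basisFun (Fin n) ℝ).toBasis μ hexp
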